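/- Let α = (N; A, B, C, D; X, N⁻, N⁺) be a multiparametric conservative scattering LSDS, i.e. ζG is unitary for every ζ ∈ T^N, with transfer function θ_α on D^N. For k = 1,…,N and z ∈ D^N define F_k(z) : N⁻ → X ⊕ N⁺ by F_k(z) = G_k ∘ col((I_X − zA)⁻¹zB, I_{N⁻}), where G_k = [[A_k, B_k], [C_k, D_k]] : X ⊕ N⁻ → X ⊕ N⁺ and col(R, S)u = (Ru, Su). Then each F_k is holomorphic on D^N and for all λ, z ∈ D^N: I_{N⁻} − θ_α(λ)*θ_α(z) = ∑_{k=1}^N (1 − conj(λ_k) z_k) F_k(λ)*F_k(z). In particular θ_α admits an Agler decomposition and θ_α(0) = 0. -/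

import Mathlib

/-!
The sesquilinear form `(λ, z) ↦ (λG)* (zG)` on `ι → ℂ` equals `1` at `(ζ, ζ)` for every `ζ` on the
torus. Rotating a single coordinate of `ζ` shows that such a form is diagonal, so
`1 - (λG)* (zG) = ∑ k, (1 - conj λ_k * z_k) • G_k* G_k`; in particular `‖zG‖ ≤ ‖z‖`, which makes
`1 - zA` invertible on the polydisc. Since `zG` maps `col((1 - zA)⁻¹ zB, 1)` to
`col((1 - zA)⁻¹ zB, θ(z))`, compressing this identity to these columns cancels the first
components and leaves the Agler decomposition.
-/

open ContinuousLinearMap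

noncomputable section

/-- The block operator `[[A, B], [C, D]] : X ⊕ N⁻ → X ⊕ N⁺` (Hilbert space direct sum). -/
def blockOp {X Nm Np : Type*}
    [NormedAddCommGroup X] [InnerProductSpace ℂ X]
    [NormedAddCommGroup Nm] [InnerProductSpace ℂ Nm]
    [NormedAddCommGroup Np] [InnerProductSpace ℂ Np]
    (A : X →L[ℂ] X) (B : Nm →L[ℂ] X) (C : X →L[ℂ] Np) (D : Nm →L[ℂ] Np) :
    WithLp 2 (X × Nm) →L[ℂ] WithLp 2 (X × Np) :=
  ((WithLp.prodContinuousLinearEquiv 2 ℂ X Np).symm :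
      (X × Np) →L[ℂ] WithLp 2 (X × Np)) ∘L
    ((A ∘L ContinuousLinearMap.fst ℂ X Nm + B ∘L ContinuousLinearMap.snd ℂ X Nm).prod
      (C ∘L ContinuousLinearMap.fst ℂ X Nm + D ∘L ContinuousLinearMap.snd ℂ X Nm)) ∘L
    (WithLp.prodContinuousLinearEquiv 2 ℂ X Nm : WithLp 2 (X × Nm) →L[ℂ] (X × Nm))

/-- The column operator `col(R, I) : N⁻ → X ⊕ N⁻`, `u ↦ (R u, u)`. -/
def colOp {X Nm : Type*}
    [NormedAddCommGroup X] [InnerProductSpace ℂ X]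
    [NormedAddCommGroup Nm] [InnerProductSpace ℂ Nm]
    (R : Nm →L[ℂ] X) : Nm →L[ℂ] WithLp 2 (X × Nm) :=
  ((WithLp.prodContinuousLinearEquiv 2 ℂ X Nm).symm :
      (X × Nm) →L[ℂ] WithLp 2 (X × Nm)) ∘L (R.prod (ContinuousLinearMap.id ℂ Nm))

/-- A bounded operator between Hilbert spaces is unitary: `G*G = I` and `GG* = I`. -/
def IsUnitaryOp {E F : Type*}
    [NormedAddCommGroup E] [InnerProductSpace ℂ E] [CompleteSpace E]
    [NormedAddCommGroup F] [InnerProductSpace ℂ F] [CompleteSpace F]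
    (G : E →L[ℂ] F) : Prop :=
  adjoint G ∘L G = ContinuousLinearMap.id ℂ E ∧
    G ∘L adjoint G = ContinuousLinearMap.id ℂ F

section ConstantOnTorus

variable {E V : Type*} [AddCommGroup E] [Module ℂ E] [AddCommGroup V] [Module ℂ V]

theorem sesquilinear_apply_eq_zero_of_const_on_circle (S : E →ₗ⋆[ℂ] E →ₗ[ℂ] V) {u w : E} {c : V}
    (h : ∀ t : ℂ, ‖t‖ = 1 → S (t • u + w) (t • u + w) = c) : S u w = 0 := by
  have h_expand (t : ℂ) (ht : ‖t‖ = 1) :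
      S u u + starRingEnd ℂ t • S u w + t • S w u + S w w = c := by
    have h_conj_mul : t * starRingEnd ℂ t = 1 := by simp [Complex.mul_conj', ht]
    rw [← h t ht]
    simp only [map_add, map_smulₛₗ, LinearMap.add_apply, LinearMap.smul_apply, smul_add, smul_smul,
      RingHom.id_apply, h_conj_mul, one_smul]
    abel
  have h_one := h_expand 1 (by simp)
  have h_neg_one := h_expand (-1) (by simp)
  have h_I := h_expand Complex.I (by simp)
  simp only [map_one, map_neg, Complex.conj_I] at h_one h_neg_one h_I
  have h_add : S u w + S w u = 0 := by
    linear_combination (norm := module) (1 / 2 : ℂ) • h_one - (1 / 2 : ℂ) • h_neg_one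
  have h_sub : Complex.I • (S w u - S u w) = 0 := by
    linear_combination (norm := module)
      h_I - (1 / 2 : ℂ) • h_one - (1 / 2 : ℂ) • h_neg_one
  have h_eq : S w u = S u w := sub_eq_zero.1 ((smul_eq_zero_iff_right Complex.I_ne_zero).1 h_sub)
  linear_combination (norm := module) (1 / 2 : ℂ) • h_add - (1 / 2 : ℂ) • h_eq

variable {ι : Type*} [DecidableEq ι] (S : (ι → ℂ) →ₗ⋆[ℂ] (ι → ℂ) →ₗ[ℂ] V) {c : V}

theorem sesquilinear_single_update_eq_zero_of_const_on_torus
    (h : ∀ ζ : ι → ℂ, (∀ k, ‖ζ k‖ = 1) → S ζ ζ = c) (j : ι) {ζ : ι → ℂ} (hζ : ∀ k, ‖ζ k‖ = 1) :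
    S (Pi.single j 1) (Function.update ζ j 0) = 0 := by
  refine sesquilinear_apply_eq_zero_of_const_on_circle S (c := c) fun t ht => ?_
  have h_rotate : t • Pi.single j 1 + Function.update ζ j 0 = Function.update ζ j t := by
    ext i
    obtain rfl | hi := eq_or_ne i j <;> simp [*]
  rw [h_rotate]
  refine h _ fun i => ?_
  obtain rfl | hi := eq_or_ne i j <;> simp [*]

theorem sesquilinear_single_single_eq_zero_of_const_on_torus
    (h : ∀ ζ : ι → ℂ, (∀ k, ‖ζ k‖ = 1) → S ζ ζ = c) {j k : ι} (hjk : j ≠ k) :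
    S (Pi.single j 1) (Pi.single k 1) = 0 := by
  have h_pos := sesquilinear_single_update_eq_zero_of_const_on_torus S h j (ζ := 1) (by simp)
  have h_neg := sesquilinear_single_update_eq_zero_of_const_on_torus S h j
    (ζ := Function.update (1 : ι → ℂ) k (-1)) fun i => by
      obtain rfl | hi := eq_or_ne i k <;> simp [*]
  have h_diff : (Pi.single k 1 : ι → ℂ) = (1 / 2 : ℂ) •
      (Function.update (1 : ι → ℂ) j 0 -
        Function.update (Function.update (1 : ι → ℂ) k (-1)) j 0) := by
    ext i
    obtain rfl | hij := eq_or_ne i j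
    · simp [hjk]
    · obtain rfl | hik := eq_or_ne i k
      · norm_num [hij]
      · simp [hij, hik]
  rw [h_diff, map_smul, map_sub, h_pos, h_neg, sub_zero, smul_zero]

theorem sesquilinear_apply_eq_sum_of_const_on_torus [Fintype ι]
    (h : ∀ ζ : ι → ℂ, (∀ k, ‖ζ k‖ = 1) → S ζ ζ = c) (lam z : ι → ℂ) :
    S lam z = ∑ k, (starRingEnd ℂ (lam k) * z k) • S (Pi.single k 1) (Pi.single k 1) := by
  rw [← LinearMap.sum_repr_mul_repr_mulₛₗ (Pi.basisFun ℂ ι) (Pi.basisFun ℂ ι),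
    Finsupp.sum_fintype _ _ (by simp)]
  refine Finset.sum_congr rfl fun j _ => ?_
  rw [Finsupp.sum_fintype _ _ (by simp), Finset.sum_eq_single j]
  · simp [smul_smul]
  · intro k _ hkj
    simp [sesquilinear_single_single_eq_zero_of_const_on_torus S h hkj.symm]
  · simp

end ConstantOnTorus

section Pencil

variable {ι E H : Type*} [Fintype ι]
  [NormedAddCommGroup E] [InnerProductSpace ℂ E] [NormedAddCommGroup H] [InnerProductSpace ℂ H]

/-- The linear pencil `ζG = ∑ k, ζ k • G k` is isometric at every point `ζ` of the unit
torus; conservative systems are those for which it is even unitary there. -/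
def IsTorusIsometric (G : ι → E →L[ℂ] H) : Prop :=
  ∀ ζ : ι → ℂ, (∀ k, ‖ζ k‖ = 1) → Isometry (∑ k, ζ k • G k : E →L[ℂ] H)

variable [CompleteSpace E] [CompleteSpace H]

/-- The operator-valued Gram form `(λ, z) ↦ (λG)* (zG)` of the linear pencil `zG = ∑ k, z k • G k`,
antilinear in `λ` and linear in `z`. -/
def gramForm (G : ι → E →L[ℂ] H) : (ι → ℂ) →ₗ⋆[ℂ] (ι → ℂ) →ₗ[ℂ] (E →L[ℂ] E) :=
  LinearMap.mk₂'ₛₗ (starRingEnd ℂ) (RingHom.id ℂ)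
    (fun lam z => adjoint (Fintype.linearCombination ℂ G lam) ∘L Fintype.linearCombination ℂ G z)
    (by simp [add_comp]) (by simp [map_smulₛₗ]) (by simp) (by simp)

theorem gramForm_apply (G : ι → E →L[ℂ] H) (lam z : ι → ℂ) :
    gramForm G lam z = adjoint (∑ k, lam k • G k) ∘L ∑ k, z k • G k :=
  rfl

theorem gramForm_single_single [DecidableEq ι] (G : ι → E →L[ℂ] H) (j k : ι) :
    gramForm G (Pi.single j 1) (Pi.single k 1) = adjoint (G j) ∘L G k := by
  simp [gramForm]

namespace IsTorusIsometric

variable {G : ι → E →L[ℂ] H}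

theorem gramForm_self (hG : IsTorusIsometric G) {ζ : ι → ℂ} (hζ : ∀ k, ‖ζ k‖ = 1) :
    gramForm G ζ ζ = 1 :=
  (isometry_iff_adjoint_comp_self _).1 (hG ζ hζ)

theorem adjoint_sum_comp_sum (hG : IsTorusIsometric G) (lam z : ι → ℂ) :
    adjoint (∑ k, lam k • G k) ∘L ∑ k, z k • G k =
      ∑ k, (starRingEnd ℂ (lam k) * z k) • (adjoint (G k) ∘L G k) := by
  classical
  simpa only [gramForm_single_single, ← gramForm_apply] using
    sesquilinear_apply_eq_sum_of_const_on_torus (gramForm G) (fun _ => hG.gramForm_self) lam z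

theorem sum_adjoint_comp_self (hG : IsTorusIsometric G) : ∑ k, adjoint (G k) ∘L G k = 1 := by
  rw [← hG.gramForm_self (ζ := 1) (by simp), gramForm_apply, hG.adjoint_sum_comp_sum]
  simp

theorem one_sub_adjoint_sum_comp_sum (hG : IsTorusIsometric G) (lam z : ι → ℂ) :
    1 - adjoint (∑ k, lam k • G k) ∘L ∑ k, z k • G k =
      ∑ k, (1 - starRingEnd ℂ (lam k) * z k) • (adjoint (G k) ∘L G k) := by
  simp only [sub_smul, one_smul, Finset.sum_sub_distrib, hG.sum_adjoint_comp_self,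
    hG.adjoint_sum_comp_sum]

theorem norm_sq_sum_apply (hG : IsTorusIsometric G) (z : ι → ℂ) (x : E) :
    ‖(∑ k, z k • G k) x‖ ^ 2 = ∑ k, ‖z k‖ ^ 2 * ‖G k x‖ ^ 2 := by
  rw [apply_norm_sq_eq_inner_adjoint_right, hG.adjoint_sum_comp_sum]
  simp only [sum_apply, smul_apply, comp_apply, inner_sum, inner_smul_right, adjoint_inner_right,
    inner_self_eq_norm_sq_to_K, Complex.conj_mul', map_sum]
  exact Finset.sum_congr rfl fun k _ => by simp [← Complex.ofReal_pow]

theorem norm_sum_le (hG : IsTorusIsometric G) (z : ι → ℂ) : ‖∑ k, z k • G k‖ ≤ ‖z‖ := by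
  refine opNorm_le_bound _ (norm_nonneg z) fun x => le_of_sq_le_sq ?_ (by positivity)
  have h_norm_sq : ‖x‖ ^ 2 = ∑ k, ‖G k x‖ ^ 2 := by
    have h_isom := (AddMonoidHomClass.isometry_iff_norm _).1 (hG 1 (by simp)) x
    rw [← h_isom, hG.norm_sq_sum_apply]
    simp
  calc ‖(∑ k, z k • G k) x‖ ^ 2 = ∑ k, ‖z k‖ ^ 2 * ‖G k x‖ ^ 2 := hG.norm_sq_sum_apply z x
    _ ≤ ∑ k, ‖z‖ ^ 2 * ‖G k x‖ ^ 2 := by gcongr with k; exact norm_le_pi_norm z k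
    _ = (‖z‖ * ‖x‖) ^ 2 := by rw [← Finset.mul_sum, ← h_norm_sq, mul_pow]

end IsTorusIsometric

end Pencil

section System

variable {X Nm Np : Type*}
  [NormedAddCommGroup X] [InnerProductSpace ℂ X]
  [NormedAddCommGroup Nm] [InnerProductSpace ℂ Nm]
  [NormedAddCommGroup Np] [InnerProductSpace ℂ Np]

/-- The input-to-state operator `(1 - A)⁻¹ B`, which is `0` when `1 - A` is not invertible. -/
def stateOp (A : X →L[ℂ] X) (B : Nm →L[ℂ] X) : Nm →L[ℂ] X :=
  Ring.inverse (1 - A) ∘L B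

/-- The input-to-output operator `D + C (1 - A)⁻¹ B` of the block operator `[[A, B], [C, D]]`; the
transfer function at `z` is its value at the blocks `zA, zB, zC, zD`. -/
def transferOp (A : X →L[ℂ] X) (B : Nm →L[ℂ] X) (C : X →L[ℂ] Np) (D : Nm →L[ℂ] Np) :
    Nm →L[ℂ] Np :=
  D + C ∘L stateOp A B

theorem blockOp_apply (A : X →L[ℂ] X) (B : Nm →L[ℂ] X) (C : X →L[ℂ] Np) (D : Nm →L[ℂ] Np)
    (v : WithLp 2 (X × Nm)) :
    blockOp A B C D v = WithLp.toLp 2 (A v.fst + B v.snd, C v.fst + D v.snd) :=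
  rfl

theorem colOp_apply (R : Nm →L[ℂ] X) (u : Nm) : colOp R u = WithLp.toLp 2 (R u, u) :=
  rfl

theorem colOp_eq_inl_comp_add_inr (R : Nm →L[ℂ] X) :
    colOp R = ((WithLp.prodContinuousLinearEquiv 2 ℂ X Nm).symm :
      (X × Nm) →L[ℂ] WithLp 2 (X × Nm)) ∘L (inl ℂ X Nm ∘L R + inr ℂ X Nm) := by
  ext u : 1
  simp [colOp_apply, ← WithLp.toLp_add]

theorem blockOp_sum_smul {ι : Type*} [Fintype ι] (A : ι → X →L[ℂ] X) (B : ι → Nm →L[ℂ] X)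
    (C : ι → X →L[ℂ] Np) (D : ι → Nm →L[ℂ] Np) (z : ι → ℂ) :
    blockOp (∑ k, z k • A k) (∑ k, z k • B k) (∑ k, z k • C k) (∑ k, z k • D k) =
      ∑ k, z k • blockOp (A k) (B k) (C k) (D k) := by
  ext v
  apply (WithLp.prodContinuousLinearEquiv 2 ℂ X Np).injective
  ext <;> simp [blockOp_apply, sum_apply, Prod.fst_sum, Prod.snd_sum, Finset.sum_add_distrib]

theorem norm_le_norm_blockOp (A : X →L[ℂ] X) (B : Nm →L[ℂ] X) (C : X →L[ℂ] Np)
    (D : Nm →L[ℂ] Np) : ‖A‖ ≤ ‖blockOp A B C D‖ := by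
  refine opNorm_le_bound _ (norm_nonneg (blockOp A B C D)) fun x => ?_
  calc ‖A x‖ = ‖(blockOp A B C D (WithLp.toLp 2 (x, 0))).fst‖ := by simp [blockOp_apply]
    _ ≤ ‖blockOp A B C D (WithLp.toLp 2 (x, 0))‖ := WithLp.norm_fst_le X _
    _ ≤ ‖blockOp A B C D‖ * ‖WithLp.toLp 2 (x, (0 : Nm))‖ := le_opNorm _ _
    _ = ‖blockOp A B C D‖ * ‖x‖ := by rw [WithLp.norm_toLp_fst]

theorem IsTorusIsometric.isUnit_one_sub_sum [CompleteSpace X] [CompleteSpace Nm] [CompleteSpace Np]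
    {ι : Type*} [Fintype ι] {A : ι → X →L[ℂ] X} {B : ι → Nm →L[ℂ] X} {C : ι → X →L[ℂ] Np}
    {D : ι → Nm →L[ℂ] Np} (hG : IsTorusIsometric fun k => blockOp (A k) (B k) (C k) (D k))
    {z : ι → ℂ} (hz : ‖z‖ < 1) : IsUnit (1 - ∑ k, z k • A k) := by
  refine isUnit_one_sub_of_norm_lt_one (lt_of_le_of_lt ?_ hz)
  calc ‖∑ k, z k • A k‖
      ≤ ‖blockOp (∑ k, z k • A k) (∑ k, z k • B k) (∑ k, z k • C k) (∑ k, z k • D k)‖ :=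
        norm_le_norm_blockOp _ _ _ _
    _ = ‖∑ k, z k • blockOp (A k) (B k) (C k) (D k)‖ := by rw [blockOp_sum_smul]
    _ ≤ ‖z‖ := hG.norm_sum_le z

theorem apply_stateOp_add {A : X →L[ℂ] X} (hA : IsUnit (1 - A)) (B : Nm →L[ℂ] X) (u : Nm) :
    A (stateOp A B u) + B u = stateOp A B u := by
  have h_cancel : (1 - A) (stateOp A B u) = B u :=
    DFunLike.congr_fun (Ring.mul_inverse_cancel _ hA) (B u)
  rw [← h_cancel, sub_apply, one_apply_eq_self, add_sub_cancel]

theorem blockOp_colOp_stateOp_apply {A : X →L[ℂ] X} (hA : IsUnit (1 - A)) (B : Nm →L[ℂ] X)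
    (C : X →L[ℂ] Np) (D : Nm →L[ℂ] Np) (u : Nm) :
    blockOp A B C D (colOp (stateOp A B) u) =
      WithLp.toLp 2 (stateOp A B u, transferOp A B C D u) := by
  rw [blockOp_apply, colOp_apply]
  congr 2
  · exact apply_stateOp_add hA B u
  · exact add_comm _ _

theorem one_sub_adjoint_transferOp_comp_transferOp
    [CompleteSpace X] [CompleteSpace Nm] [CompleteSpace Np]
    {A A' : X →L[ℂ] X} (hA : IsUnit (1 - A)) (hA' : IsUnit (1 - A')) (B B' : Nm →L[ℂ] X)
    (C C' : X →L[ℂ] Np) (D D' : Nm →L[ℂ] Np) :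
    1 - adjoint (transferOp A B C D) ∘L transferOp A' B' C' D' =
      adjoint (colOp (stateOp A B)) ∘L
        (1 - adjoint (blockOp A B C D) ∘L blockOp A' B' C' D') ∘L colOp (stateOp A' B') := by
  ext u
  refine ext_inner_left ℂ fun w => ?_
  simp only [sub_apply, one_apply_eq_self, comp_apply, inner_sub_right,
    adjoint_inner_right, blockOp_colOp_stateOp_apply hA, blockOp_colOp_stateOp_apply hA']
  simp only [colOp_apply, WithLp.prod_inner_apply]
  ring

section Differentiability

variable {E : Type*} [NormedAddCommGroup E] [NormedSpace ℂ E] {z : E}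

theorem differentiableAt_colOp {R : E → Nm →L[ℂ] X} (hR : DifferentiableAt ℂ R z) :
    DifferentiableAt ℂ (fun w => colOp (R w)) z := by
  simp only [colOp_eq_inl_comp_add_inr]
  exact (differentiableAt_const _).clm_comp (((differentiableAt_const _).clm_comp hR).add_const _)

theorem differentiableAt_stateOp [CompleteSpace X] {A : E → X →L[ℂ] X} {B : E → Nm →L[ℂ] X}
    (hA : DifferentiableAt ℂ A z) (hB : DifferentiableAt ℂ B z) (h_unit : IsUnit (1 - A z)) :
    DifferentiableAt ℂ (fun w => stateOp (A w) (B w)) z :=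
  ((differentiableAt_inverse h_unit).comp z (hA.const_sub 1)).clm_comp hB

end Differentiability

end System

theorem conservative_transfer_function_agler_decomposition_general
    {ι X Nm Np : Type*} [Fintype ι]
    [NormedAddCommGroup X] [InnerProductSpace ℂ X] [CompleteSpace X]
    [NormedAddCommGroup Nm] [InnerProductSpace ℂ Nm] [CompleteSpace Nm]
    [NormedAddCommGroup Np] [InnerProductSpace ℂ Np] [CompleteSpace Np]
    (A : ι → (X →L[ℂ] X)) (B : ι → (Nm →L[ℂ] X))
    (C : ι → (X →L[ℂ] Np)) (D : ι → (Nm →L[ℂ] Np))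
    (h_isom : ∀ ζ : ι → ℂ, (∀ k, ‖ζ k‖ = 1) →
      Isometry
        (blockOp (∑ k, ζ k • A k) (∑ k, ζ k • B k) (∑ k, ζ k • C k) (∑ k, ζ k • D k)))
    (θ : (ι → ℂ) → (Nm →L[ℂ] Np))
    (hθ : ∀ z : ι → ℂ, θ z =
      transferOp (∑ k, z k • A k) (∑ k, z k • B k) (∑ k, z k • C k) (∑ k, z k • D k))
    (F : ι → (ι → ℂ) → (Nm →L[ℂ] WithLp 2 (X × Np)))
    (hF : ∀ (k : ι) (z : ι → ℂ), F k z =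
      blockOp (A k) (B k) (C k) (D k) ∘L colOp (stateOp (∑ j, z j • A j) (∑ j, z j • B j))) :
    (∀ z : ι → ℂ, (∀ k, ‖z k‖ < 1) → IsUnit ((1 : X →L[ℂ] X) - ∑ k, z k • A k)) ∧
    (∀ k : ι, DifferentiableOn ℂ (F k) {z : ι → ℂ | ∀ j, ‖z j‖ < 1}) ∧
    (∀ lam z : ι → ℂ, (∀ k, ‖lam k‖ < 1) → (∀ k, ‖z k‖ < 1) →
      (1 : Nm →L[ℂ] Nm) - adjoint (θ lam) ∘L θ z =
        ∑ k, (1 - starRingEnd ℂ (lam k) * z k) • (adjoint (F k lam) ∘L F k z)) ∧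
    θ 0 = 0 := by
  have hG : IsTorusIsometric fun k => blockOp (A k) (B k) (C k) (D k) := fun ζ hζ => by
    simpa only [blockOp_sum_smul] using h_isom ζ hζ
  have h_unit : ∀ z : ι → ℂ, (∀ k, ‖z k‖ < 1) → IsUnit (1 - ∑ k, z k • A k) := fun z hz =>
    hG.isUnit_one_sub_sum ((pi_norm_lt_iff one_pos).2 hz)
  refine ⟨h_unit, fun k z hz => ?_, fun lam z hlam hz => ?_, ?_⟩
  · have hA : DifferentiableAt ℂ (fun w : ι → ℂ => ∑ j, w j • A j) z := by fun_prop
    have hB : DifferentiableAt ℂ (fun w : ι → ℂ => ∑ j, w j • B j) z := by fun_prop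
    rw [funext (hF k)]
    exact ((differentiableAt_const _).clm_comp <| differentiableAt_colOp <|
      differentiableAt_stateOp hA hB (h_unit z hz)).differentiableWithinAt
  · rw [hθ, hθ, one_sub_adjoint_transferOp_comp_transferOp (h_unit lam hlam) (h_unit z hz),
      blockOp_sum_smul, blockOp_sum_smul, hG.one_sub_adjoint_sum_comp_sum]
    simp only [hF, adjoint_comp, finsetSum_comp, comp_finsetSum, smul_comp, comp_smul, comp_assoc]
  · simp [hθ, transferOp]

/-- the transfer function `θ_α` of a multiparametric conservative scattering
LSDS admits the Agler decomposition
`I − θ_α(λ)* θ_α(z) = ∑_k (1 − conj(λ_k) z_k) F_k(λ)* F_k(z)` on the polydisc, with the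
holomorphic functions `F_k(z) = G_k ∘ col((I − zA)⁻¹ zB, I)`; in particular `θ_α(0) = 0`. -/
theorem conservative_transfer_function_agler_decomposition {Nn : ℕ} {X Nm Np : Type*}
    [NormedAddCommGroup X] [InnerProductSpace ℂ X] [CompleteSpace X]
    [TopologicalSpace.SeparableSpace X]
    [NormedAddCommGroup Nm] [InnerProductSpace ℂ Nm] [CompleteSpace Nm]
    [TopologicalSpace.SeparableSpace Nm]
    [NormedAddCommGroup Np] [InnerProductSpace ℂ Np] [CompleteSpace Np]
    [TopologicalSpace.SeparableSpace Np]
    (A : Fin Nn → (X →L[ℂ] X)) (B : Fin Nn → (Nm →L[ℂ] X))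
    (C : Fin Nn → (X →L[ℂ] Np)) (D : Fin Nn → (Nm →L[ℂ] Np))
    (hcons : ∀ ζ : Fin Nn → ℂ, (∀ k, ‖ζ k‖ = 1) →
      IsUnitaryOp
        (blockOp (∑ k, ζ k • A k) (∑ k, ζ k • B k) (∑ k, ζ k • C k) (∑ k, ζ k • D k)))
    (θ : (Fin Nn → ℂ) → (Nm →L[ℂ] Np))
    (hθ : ∀ z : Fin Nn → ℂ, θ z =
      ∑ k, z k • D k +
        (∑ k, z k • C k) ∘L (Ring.inverse (1 - ∑ k, z k • A k)) ∘L (∑ k, z k • B k))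
    (F : Fin Nn → (Fin Nn → ℂ) → (Nm →L[ℂ] WithLp 2 (X × Np)))
    (hF : ∀ (k : Fin Nn) (z : Fin Nn → ℂ), F k z =
      blockOp (A k) (B k) (C k) (D k) ∘L
        colOp ((Ring.inverse (1 - ∑ j, z j • A j)) ∘L (∑ j, z j • B j))) :
    (∀ z : Fin Nn → ℂ, (∀ k, ‖z k‖ < 1) → IsUnit ((1 : X →L[ℂ] X) - ∑ k, z k • A k)) ∧
    (∀ k : Fin Nn, DifferentiableOn ℂ (F k) {z : Fin Nn → ℂ | ∀ j, ‖z j‖ < 1}) ∧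
    (∀ lam z : Fin Nn → ℂ, (∀ k, ‖lam k‖ < 1) → (∀ k, ‖z k‖ < 1) →
      (1 : Nm →L[ℂ] Nm) - adjoint (θ lam) ∘L θ z =
        ∑ k, (1 - starRingEnd ℂ (lam k) * z k) • (adjoint (F k lam) ∘L F k z)) ∧
    θ 0 = 0 :=
  conservative_transfer_function_agler_decomposition_general A B C D
    (fun ζ hζ => (isometry_iff_adjoint_comp_self _).2 (hcons ζ hζ).1) θ hθ F hF
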